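/- Let e : ℂ → ℂ be an entire function with e′ not identically zero, and let g : ℂ → ℂ be meromorphic on ℂ. If both e and g are differentially algebraic, then the composition g ∘ e is meromorphic on ℂ and differentially algebraic. -/

import Mathlib

/-- A function `f : ℂ → ℂ` (meromorphic on `ℂ`) is differentially algebraic over `ℂ(z)`:
there are `n ∈ ℕ` and a nonzero polynomial `P ∈ ℂ[X₀, …, X_{n+1}]` such that
`P (z, f z, f' z, …, f⁽ⁿ⁾ z) = 0` at every point `z` where `f` is analytic. -/
def DifferentiallyAlgebraic (f : ℂ → ℂ) : Prop :=
  ∃ (n : ℕ) (P : MvPolynomial (Fin (n + 2)) ℂ),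
    P ≠ 0 ∧ ∀ z : ℂ, AnalyticAt ℂ f z →
      MvPolynomial.eval
        (fun i : Fin (n + 2) => if i.val = 0 then z else iteratedDeriv (i.val - 1) f z) P = 0

/-!
A function is differentially algebraic exactly when its jet `(z, f, f', f'', …)` generates a field
of finite transcendence degree: in characteristic zero a derivation preserves algebraicity, so once
one derivative is algebraic over the preceding entries of the jet, all later ones are too.

Passing to Taylor series at a point `a` where `e' ≠ 0` and `g` is analytic at `e a` moves the
argument into the differential domain `ℂ⟦X⟧`. There the jet of `g` composed with `e` is the jet of
`g ∘ e` for the derivation `(e')⁻¹ d/dz`. Hence the algebraic closure of a finite set containing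
initial segments of the jets of `e` and of `g` along `e` is stable under `d/dz`, and it contains
`g ∘ e`, hence its whole jet, which is therefore algebraically dependent. The identity theorem
extends the resulting relation from a neighbourhood of `a` to all points of analyticity, which form
a connected set.
-/

open scoped PowerSeries Topology

section DifferentialAlgebra

open Polynomial

variable {k A : Type*} [CommRing k] [CommRing A] [Algebra k A] (D : Derivation k A A)

theorem derivation_aeval_sub_mem {R : Subalgebra k A} {K : Subalgebra R A}
    (hD : ∀ a : R, D a ∈ K) {x : A} (hx : x ∈ K) (p : R[X]) :
    D (aeval x p) - aeval x (derivative p) * D x ∈ K := by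
  induction p using Polynomial.induction_on' with
  | add p q hp hq =>
    convert! K.add_mem hp hq using 1
    simp only [map_add]
    ring
  | monomial n a =>
    convert! K.mul_mem (K.pow_mem hx n) (hD a) using 1
    simp only [aeval_monomial, derivative_monomial, Derivation.leibniz, Derivation.leibniz_pow,
      smul_eq_mul, map_mul, map_natCast, nsmul_eq_mul, Subalgebra.algebraMap_def,
      Algebra.algebraMap_self_apply]
    ring

variable [IsDomain A]

theorem exists_aeval_eq_zero_and_aeval_derivative_ne_zero [FaithfulSMul k A] [CharZero A] {x : A}
    (hx : IsAlgebraic k x) : ∃ p : k[X], aeval x p = 0 ∧ aeval x (derivative p) ≠ 0 := by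
  have hinj := FaithfulSMul.algebraMap_injective k A
  have : IsDomain k := hinj.isDomain _
  have : CharZero k := (RingHom.charZero_iff hinj).2 inferInstance
  obtain ⟨p, hp, hpx⟩ := hx
  induction hd : p.natDegree using Nat.strong_induction_on generalizing p with
  | _ d ih =>
    have hdeg : p.natDegree ≠ 0 := fun h ↦ by
      rw [eq_C_of_natDegree_eq_zero h] at hp hpx
      simp_all
    by_cases hderiv : aeval x (derivative p) = 0
    · exact ih _ (hd ▸ natDegree_derivative_lt hdeg) _ (derivative_ne_zero.2 hdeg) hderiv rfl
    · exact ⟨p, hpx, hderiv⟩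

theorem derivation_eq_zero_of_isAlgebraic [FaithfulSMul k A] [CharZero A] {x : A}
    (hx : IsAlgebraic k x) : D x = 0 := by
  obtain ⟨p, hpx, hderiv⟩ := exists_aeval_eq_zero_and_aeval_derivative_ne_zero hx
  have hmul : aeval x (derivative p) * D x = 0 := by
    rw [← smul_eq_mul, ← D.map_aeval, hpx, map_zero]
  exact (mul_eq_zero.1 hmul).resolve_left hderiv

theorem isAlgebraic_derivation [CharZero A] {R : Subalgebra k A}
    (hD : ∀ a : R, IsAlgebraic R (D a)) {x : A} (hx : IsAlgebraic R x) :
    IsAlgebraic R (D x) := by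
  obtain ⟨p, hpx, hderiv⟩ := exists_aeval_eq_zero_and_aeval_derivative_ne_zero hx
  have hmul : IsAlgebraic R (aeval x (derivative p) * D x) := by
    have hmem := derivation_aeval_sub_mem D (K := Subalgebra.algebraicClosure R A) hD hx p
    rw [hpx, map_zero, zero_sub] at hmem
    simpa using hmem.neg
  have hcoef : aeval x (derivative p) ∈ Subalgebra.algebraicClosure R A :=
    Algebra.adjoin_le (Set.singleton_subset_iff.2 hx) (aeval_mem_adjoin_singleton R x)
  exact .of_mul (mem_nonZeroDivisors_of_ne_zero hderiv) hcoef hmul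

variable (k) in
/-- The elements of `A` that are algebraic over the subalgebra generated by `S`, i.e. the closure of
`S` in the algebraic independence matroid. It is the stand-in, inside the domain `A`, for the
relative algebraic closure of the field generated by `S`. -/
def algebraicHull (S : Set A) : Subalgebra k A :=
  (Subalgebra.algebraicClosure (Algebra.adjoin k S) A).restrictScalars k

theorem mem_algebraicHull {S : Set A} {x : A} :
    x ∈ algebraicHull k S ↔ IsAlgebraic (Algebra.adjoin k S) x :=
  Iff.rfl

theorem coe_algebraicHull [FaithfulSMul k A] (S : Set A) :
    (algebraicHull k S : Set A) = (AlgebraicIndependent.matroid k A).closure S :=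
  AlgebraicIndependent.matroid_closure_eq.symm

theorem subset_algebraicHull (S : Set A) : S ⊆ algebraicHull k S := fun x hx ↦
  isAlgebraic_algebraMap (⟨x, Algebra.subset_adjoin hx⟩ : Algebra.adjoin k S)

theorem algebraicHull_mono {S T : Set A} (h : S ⊆ T) : algebraicHull k S ≤ algebraicHull k T :=
  fun _ hx ↦ hx.adjoin_of_forall_isAlgebraic fun _ hy ↦ absurd (h hy.1) hy.2

theorem mem_algebraicHull_of_mul_mem {S : Set A} {c x : A} (hc : c ≠ 0)
    (hcS : c ∈ algebraicHull k S) (hcx : c * x ∈ algebraicHull k S) : x ∈ algebraicHull k S :=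
  IsAlgebraic.of_mul (mem_nonZeroDivisors_of_ne_zero hc) hcS hcx

theorem derivation_mem_algebraicHull [CharZero A] {S : Set A}
    (hS : ∀ s ∈ S, D s ∈ algebraicHull k S) {x : A} (hx : x ∈ algebraicHull k S) :
    D x ∈ algebraicHull k S := by
  refine isAlgebraic_derivation D ?_ hx
  rintro ⟨a, ha⟩
  have hle : Algebra.adjoin k S ≤ algebraicHull k S := Algebra.adjoin_le (subset_algebraicHull S)
  change D a ∈ algebraicHull k S
  induction ha using Algebra.adjoin_induction with
  | mem s hs => exact hS s hs
  | algebraMap r => simp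
  | add a b _ _ ha hb => simpa only [map_add] using add_mem ha hb
  | mul a b ha' hb' ha hb =>
    simpa only [D.leibniz, smul_eq_mul] using add_mem (mul_mem (hle ha') hb) (mul_mem (hle hb') ha)

theorem exists_mem_algebraicHull_image_Iio [FaithfulSMul k A] {ι : Type*} [LinearOrder ι]
    {x : ι → A} (hx : ¬ AlgebraicIndependent k x) :
    ∃ i, x i ∈ algebraicHull k (x '' Set.Iio i) := by
  by_contra! htrans
  have hfinset (t : Finset ι) : AlgebraicIndepOn k x t := by
    induction t using Finset.induction_on_max with
    | empty =>
      rw [Finset.coe_empty]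
      exact algebraicIndependent_empty_type_iff.2 (FaithfulSMul.algebraMap_injective k A)
    | insert i t hlt ih =>
      rw [Finset.coe_insert]
      exact ih.insert fun h ↦ htrans i (algebraicHull_mono (Set.image_mono hlt) h)
  exact hx (algebraicIndependent_of_finite_type fun t ht ↦ ht.coe_toFinset ▸ hfinset ht.toFinset)

theorem not_algebraicIndependent_of_forall_mem_algebraicHull [FaithfulSMul k A] {ι : Type*}
    [Infinite ι] {S : Set A} (hS : S.Finite) {x : ι → A} (hx : ∀ i, x i ∈ algebraicHull k S) :
    ¬ AlgebraicIndependent k x := fun hind ↦ by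
  have : Nontrivial k := Module.nontrivial k A
  let M := AlgebraicIndependent.matroid k A
  have hindep : M.Indep (Set.range x) := hind.to_subtype_range
  have hsub : Set.range x ⊆ M.closure S := by
    rw [← coe_algebraicHull]
    exact Set.range_subset_iff.2 hx
  exact Set.infinite_range_of_injective hind.injective
    (hindep.finite_of_subset_isRkFinite hsub (M.isRkFinite_of_finite hS).closure)

/-- `u = (x, y, y', y'', …)` is the sequence formed by a variable `x` and the successive derivatives
of some `y` with respect to `x`, where `c = D x`, so that `d/dx = c⁻¹ D`; the factor `c` is kept on
the right because it need not be invertible in `A`. -/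
structure IsJet (c : A) (u : ℕ → A) : Prop where
  apply_zero : D (u 0) = c
  apply_succ (i : ℕ) : D (u (i + 1)) = c * u (i + 2)

namespace IsJet

variable {D} {c : A} {u v w : ℕ → A} {S : Set A}

theorem forall_mem_algebraicHull (hu : IsJet D c u)
    (hD : ∀ x ∈ algebraicHull k S, D x ∈ algebraicHull k S) (hc : c ≠ 0)
    (h0 : u 0 ∈ algebraicHull k S) (h1 : u 1 ∈ algebraicHull k S) (i : ℕ) :
    u i ∈ algebraicHull k S := by
  have hcS : c ∈ algebraicHull k S := hu.apply_zero ▸ hD _ h0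
  have hsucc (j : ℕ) : u (j + 1) ∈ algebraicHull k S := by
    induction j with
    | zero => exact h1
    | succ j ih => exact mem_algebraicHull_of_mul_mem hc hcS (hu.apply_succ j ▸ hD _ ih)
  exact i.casesOn h0 hsucc

variable [FaithfulSMul k A] [CharZero A]

theorem exists_succ_mem_algebraicHull_image_Iio (hu : IsJet D c u) (hc : c ≠ 0)
    (hdep : ¬ AlgebraicIndependent k u) :
    ∃ n, u (n + 1) ∈ algebraicHull k (u '' Set.Iio (n + 1)) := by
  obtain ⟨_ | n, hn⟩ := exists_mem_algebraicHull_image_Iio hdep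
  · have halg : IsAlgebraic k (u 0) := by
      rw [mem_algebraicHull, ← Nat.bot_eq_zero, Set.Iio_bot, Set.image_empty,
        Algebra.adjoin_empty] at hn
      exact Subalgebra.isAlgebraic_of_isAlgebraic_bot hn
    exact absurd (hu.apply_zero ▸ derivation_eq_zero_of_isAlgebraic D halg) hc
  · exact ⟨n, hn⟩

theorem exists_finite_algebraicHull (hu : IsJet D c u) (hc : c ≠ 0)
    (hdep : ¬ AlgebraicIndependent k u) (hS : S.Finite)
    (hD : ∀ x ∈ algebraicHull k S, D x ∈ algebraicHull k S) (hcS : c ∈ algebraicHull k S) :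
    ∃ T : Set A, S ⊆ T ∧ T.Finite ∧ (∀ x ∈ algebraicHull k T, D x ∈ algebraicHull k T) ∧
      ∀ i, u i ∈ algebraicHull k T := by
  obtain ⟨n, hn⟩ := hu.exists_succ_mem_algebraicHull_image_Iio hc hdep
  let T := S ∪ u '' Set.Iio (n + 1)
  have hST : algebraicHull k S ≤ algebraicHull k T := algebraicHull_mono Set.subset_union_left
  have huT : ∀ i ≤ n + 1, u i ∈ algebraicHull k T := fun i hi ↦ by
    obtain hi | rfl := hi.lt_or_eq
    · exact subset_algebraicHull T (.inr ⟨i, hi, rfl⟩)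
    · exact algebraicHull_mono Set.subset_union_right hn
  have hDT : ∀ x ∈ algebraicHull k T, D x ∈ algebraicHull k T := by
    refine fun x ↦ derivation_mem_algebraicHull D ?_
    rintro _ (hs | ⟨_ | i, hi, rfl⟩)
    · exact hST (hD _ (subset_algebraicHull S hs))
    · exact hu.apply_zero ▸ hST hcS
    · exact hu.apply_succ i ▸ mul_mem (hST hcS) (huT _ hi)
  exact ⟨T, Set.subset_union_left, hS.union ((Set.finite_Iio _).image u), hDT,
    hu.forall_mem_algebraicHull hDT hc (huT 0 (by lia)) (huT 1 (by lia))⟩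

theorem not_algebraicIndependent_comp (hu : IsJet D 1 u) (hv : IsJet D (u 2) v)
    (hw : IsJet D 1 w) (hw0 : w 0 = u 0) (hw1 : w 1 = v 1) (hu2 : u 2 ≠ 0)
    (hudep : ¬ AlgebraicIndependent k u) (hvdep : ¬ AlgebraicIndependent k v) :
    ¬ AlgebraicIndependent k w := by
  obtain ⟨S, -, hS, hDS, huS⟩ := hu.exists_finite_algebraicHull one_ne_zero hudep Set.finite_empty
    (fun _ ↦ derivation_mem_algebraicHull D (by simp)) (one_mem _)
  obtain ⟨T, hST, hT, hDT, hvT⟩ := hv.exists_finite_algebraicHull hu2 hvdep hS hDS (huS 2)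
  have hw0T : w 0 ∈ algebraicHull k T := hw0 ▸ algebraicHull_mono hST (huS 0)
  exact not_algebraicIndependent_of_forall_mem_algebraicHull hT
    (hw.forall_mem_algebraicHull hDT one_ne_zero hw0T (hw1 ▸ hvT 1))

end IsJet

end DifferentialAlgebra

section TaylorSeries

open scoped ContDiff Nat

variable {𝕜 : Type*} [NontriviallyNormedField 𝕜] {f g : 𝕜 → 𝕜} {a : 𝕜}

/-- The Taylor series of `f` at `a`, as a formal power series in `z - a`. Working with formal power
series puts germs of analytic functions in an integral domain on which `d/dz` is a derivation. -/
noncomputable def taylorSeries (f : 𝕜 → 𝕜) (a : 𝕜) : 𝕜⟦X⟧ :=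
  PowerSeries.mk fun n ↦ iteratedDeriv n f a / (n ! : 𝕜)

theorem coeff_taylorSeries (f : 𝕜 → 𝕜) (a : 𝕜) (n : ℕ) :
    PowerSeries.coeff n (taylorSeries f a) = iteratedDeriv n f a / (n ! : 𝕜) :=
  PowerSeries.coeff_mk _ _

theorem taylorSeries_congr (h : f =ᶠ[𝓝 a] g) : taylorSeries f a = taylorSeries g a := by
  ext n
  rw [coeff_taylorSeries, coeff_taylorSeries, h.iteratedDeriv_eq n]

theorem taylorSeries_const (c a : 𝕜) : taylorSeries (fun _ ↦ c) a = algebraMap 𝕜 𝕜⟦X⟧ c := by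
  ext n
  cases n <;> simp [coeff_taylorSeries, iteratedDeriv_const, PowerSeries.coeff_C]

theorem taylorSeries_add (hf : ContDiffAt 𝕜 ∞ f a) (hg : ContDiffAt 𝕜 ∞ g a) :
    taylorSeries (f + g) a = taylorSeries f a + taylorSeries g a := by
  ext n
  rw [map_add, coeff_taylorSeries, coeff_taylorSeries, coeff_taylorSeries,
    iteratedDeriv_add (contDiffAt_infty.1 hf n) (contDiffAt_infty.1 hg n), add_div]

variable [CharZero 𝕜]

theorem taylorSeries_deriv (f : 𝕜 → 𝕜) (a : 𝕜) :
    taylorSeries (deriv f) a = PowerSeries.derivative 𝕜 (taylorSeries f a) := by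
  ext n
  have hfact : (n ! : 𝕜) ≠ 0 := Nat.cast_ne_zero.2 n.factorial_ne_zero
  have hsucc : (n + 1 : 𝕜) ≠ 0 := n.cast_add_one_ne_zero
  rw [PowerSeries.coeff_derivative, coeff_taylorSeries, coeff_taylorSeries, iteratedDeriv_succ',
    Nat.factorial_succ, Nat.cast_mul, Nat.cast_add_one]
  field_simp

theorem taylorSeries_mul (hf : ContDiffAt 𝕜 ∞ f a) (hg : ContDiffAt 𝕜 ∞ g a) :
    taylorSeries (f * g) a = taylorSeries f a * taylorSeries g a := by
  ext n
  simp only [PowerSeries.coeff_mul, coeff_taylorSeries]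
  rw [iteratedDeriv_mul (contDiffAt_infty.1 hf n) (contDiffAt_infty.1 hg n), Finset.sum_div,
    Finset.Nat.sum_antidiagonal_eq_sum_range_succ
      (fun i j ↦ iteratedDeriv i f a / (i ! : 𝕜) * (iteratedDeriv j g a / (j ! : 𝕜)))]
  refine Finset.sum_congr rfl fun i hi ↦ ?_
  have hfact (m : ℕ) : (m ! : 𝕜) ≠ 0 := Nat.cast_ne_zero.2 m.factorial_ne_zero
  rw [Nat.cast_choose 𝕜 (Finset.mem_range_succ_iff.1 hi)]
  field_simp [hfact]

variable [CompleteSpace 𝕜]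

theorem taylorSeries_eq_zero_iff (hf : AnalyticAt 𝕜 f a) :
    taylorSeries f a = 0 ↔ ∀ᶠ z in 𝓝 a, f z = 0 := by
  refine ⟨fun h ↦ ?_, fun h ↦ ?_⟩
  · have hcoeff : (fun n ↦ iteratedDeriv n f a / (n ! : 𝕜)) = 0 := funext fun n ↦ by
      rw [← coeff_taylorSeries, h, map_zero, Pi.zero_apply]
    have hseries := hf.hasFPowerSeriesAt
    rw [hcoeff, FormalMultilinearSeries.ofScalars_series_eq_zero_of_scalar_zero] at hseries
    exact hseries.eventually_eq_zero
  · rw [taylorSeries_congr h, taylorSeries_const, map_zero]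

section AlgebraicRelations

variable {ι : Type*} {x : ι → 𝕜 → 𝕜}

theorem aeval_taylorSeries (hx : ∀ i, AnalyticAt 𝕜 (x i) a) (P : MvPolynomial ι 𝕜) :
    MvPolynomial.aeval (fun i ↦ taylorSeries (x i) a) P =
      taylorSeries (fun z ↦ MvPolynomial.aeval (fun i ↦ x i z) P) a := by
  have hsmooth (Q : MvPolynomial ι 𝕜) :
      ContDiffAt 𝕜 ∞ (fun z ↦ MvPolynomial.aeval (fun i ↦ x i z) Q) a :=
    (AnalyticAt.aeval_mvPolynomial hx Q).contDiffAt
  induction P using MvPolynomial.induction_on with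
  | C c => simp only [MvPolynomial.aeval_C, taylorSeries_const, Algebra.algebraMap_self_apply]
  | add P Q hP hQ =>
    simp only [map_add, hP, hQ]
    exact (taylorSeries_add (hsmooth P) (hsmooth Q)).symm
  | mul_X P i hP =>
    simp only [map_mul, hP, MvPolynomial.aeval_X]
    exact (taylorSeries_mul (hsmooth P) (hx i).contDiffAt).symm

theorem not_algebraicIndependent_taylorSeries_iff (hx : ∀ i, AnalyticAt 𝕜 (x i) a) :
    ¬ AlgebraicIndependent 𝕜 (fun i ↦ taylorSeries (x i) a) ↔
      ∃ P : MvPolynomial ι 𝕜, P ≠ 0 ∧ ∀ᶠ z in 𝓝 a, MvPolynomial.aeval (fun i ↦ x i z) P = 0 := by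
  simp only [algebraicIndependent_iff, aeval_taylorSeries hx,
    taylorSeries_eq_zero_iff (.aeval_mvPolynomial hx _)]
  push Not
  exact exists_congr fun P ↦ and_comm

theorem not_algebraicIndependent_taylorSeries_comp {e : 𝕜 → 𝕜} (he : AnalyticAt 𝕜 e a)
    (hx : ∀ i, AnalyticAt 𝕜 (x i) (e a))
    (hdep : ¬ AlgebraicIndependent 𝕜 fun i ↦ taylorSeries (x i) (e a)) :
    ¬ AlgebraicIndependent 𝕜 fun i ↦ taylorSeries (x i ∘ e) a := by
  obtain ⟨P, hP, hPx⟩ := (not_algebraicIndependent_taylorSeries_iff hx).1 hdep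
  exact (not_algebraicIndependent_taylorSeries_iff fun i ↦ (hx i).comp he).2
    ⟨P, hP, he.continuousAt.eventually hPx⟩

end AlgebraicRelations

end TaylorSeries

section FunctionJet

variable {𝕜 : Type*} [NontriviallyNormedField 𝕜]

/-- The infinite jet `(z, f, f', f'', …)` of `f`, whose zeroth entry is the variable itself, so that
the `i`-th derivative sits at index `i + 1`. -/
noncomputable def jet (f : 𝕜 → 𝕜) : ℕ → 𝕜 → 𝕜
  | 0 => id
  | i + 1 => iteratedDeriv i f

theorem jet_apply (f : 𝕜 → 𝕜) (i : ℕ) (z : 𝕜) :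
    jet f i z = if i = 0 then z else iteratedDeriv (i - 1) f z := by
  cases i <;> rfl

variable [CompleteSpace 𝕜] {e f g : 𝕜 → 𝕜} {a : 𝕜}

theorem analyticAt_jet (hf : AnalyticAt 𝕜 f a) : ∀ i, AnalyticAt 𝕜 (jet f i) a
  | 0 => analyticAt_id
  | i + 1 => by
    rw [jet, iteratedDeriv_eq_iterate]
    exact hf.iterated_deriv i

theorem exists_deriv_ne_zero_and_analyticAt_comp {E : Type*} [NormedAddCommGroup E]
    [NormedSpace 𝕜 E] [CompleteSpace E] {h : 𝕜 → E} (he : AnalyticAt 𝕜 e a)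
    (he' : deriv e a ≠ 0) (hh : MeromorphicAt h (e a)) :
    ∃ z, deriv e z ≠ 0 ∧ AnalyticAt 𝕜 h (e z) := by
  have hhz : ∀ᶠ z in 𝓝[≠] a, AnalyticAt 𝕜 h (e z) :=
    (he.differentiableAt.hasDerivAt.tendsto_nhdsNE he').eventually hh.eventually_analyticAt
  have hez : ∀ᶠ z in 𝓝[≠] a, deriv e z ≠ 0 :=
    (he.deriv.continuousAt.eventually_ne he').filter_mono nhdsWithin_le_nhds
  exact (hez.and hhz).exists

theorem deriv_jet_succ_comp (he : AnalyticAt 𝕜 e a) (hg : AnalyticAt 𝕜 g (e a)) (i : ℕ) :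
    deriv (jet g (i + 1) ∘ e) =ᶠ[𝓝 a] deriv e * (jet g (i + 2) ∘ e) := by
  filter_upwards [he.eventually_analyticAt, he.continuousAt.eventually hg.eventually_analyticAt]
    with z hez hgz
  rw [deriv_comp z (analyticAt_jet hgz _).differentiableAt hez.differentiableAt, mul_comm]
  simp only [jet, iteratedDeriv_succ, Pi.mul_apply, Function.comp_apply]

variable [CharZero 𝕜]

theorem isJet_taylorSeries_jet_comp (he : AnalyticAt 𝕜 e a) (hg : AnalyticAt 𝕜 g (e a)) :
    IsJet (PowerSeries.derivative 𝕜) (taylorSeries (deriv e) a)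
      fun i ↦ taylorSeries (jet g i ∘ e) a where
  apply_zero := (taylorSeries_deriv e a).symm
  apply_succ i := by
    rw [← taylorSeries_deriv, taylorSeries_congr (deriv_jet_succ_comp he hg i),
      taylorSeries_mul he.deriv.contDiffAt ((analyticAt_jet hg _).comp he).contDiffAt]

theorem isJet_taylorSeries_jet (hf : AnalyticAt 𝕜 f a) :
    IsJet (PowerSeries.derivative 𝕜) 1 fun i ↦ taylorSeries (jet f i) a := by
  have hderiv : taylorSeries (deriv (id : 𝕜 → 𝕜)) a = 1 := by
    rw [deriv_id', taylorSeries_const, map_one]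
  exact hderiv ▸ isJet_taylorSeries_jet_comp analyticAt_id hf

theorem not_algebraicIndependent_taylorSeries_jet_comp (he : AnalyticAt 𝕜 e a)
    (hg : AnalyticAt 𝕜 g (e a)) (he' : deriv e a ≠ 0)
    (hedep : ¬ AlgebraicIndependent 𝕜 fun i ↦ taylorSeries (jet e i) a)
    (hgdep : ¬ AlgebraicIndependent 𝕜 fun i ↦ taylorSeries (jet g i) (e a)) :
    ¬ AlgebraicIndependent 𝕜 fun i ↦ taylorSeries (jet (g ∘ e) i) a := by
  have : CharZero 𝕜⟦X⟧ := charZero_of_injective_algebraMap (algebraMap 𝕜 𝕜⟦X⟧).injective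
  have hjet2 : jet e 2 = deriv e := iteratedDeriv_one
  have hderiv : taylorSeries (jet e 2) a ≠ 0 := fun h ↦ he' <| by
    rw [hjet2] at h
    exact ((taylorSeries_eq_zero_iff he.deriv).1 h).self_of_nhds
  have hcomp : jet (g ∘ e) 1 = jet g 1 ∘ e := by simp only [jet, iteratedDeriv_zero]
  exact (isJet_taylorSeries_jet he).not_algebraicIndependent_comp
    (hjet2 ▸ isJet_taylorSeries_jet_comp he hg) (isJet_taylorSeries_jet (hg.comp he)) rfl
    (congrArg (taylorSeries · a) hcomp) hderiv hedep
    (not_algebraicIndependent_taylorSeries_comp he (analyticAt_jet hg) hgdep)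

end FunctionJet

section DifferentiallyAlgebraic

theorem isPreconnected_setOf_analyticAt {E : Type*} [NormedAddCommGroup E] [NormedSpace ℂ E]
    [CompleteSpace E] {f : ℂ → E} (hf : Meromorphic f) :
    IsPreconnected {z | AnalyticAt ℂ f z} := by
  have hconn := hf.countable_compl_analyticAt.isConnected_compl_of_one_lt_rank (by simp)
  rw [compl_compl] at hconn
  exact hconn.isPreconnected

variable {f : ℂ → ℂ}

theorem differentiallyAlgebraic_iff_exists_aeval_jet :
    DifferentiallyAlgebraic f ↔ ∃ P : MvPolynomial ℕ ℂ, P ≠ 0 ∧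
      ∀ z, AnalyticAt ℂ f z → MvPolynomial.aeval (fun i ↦ jet f i z) P = 0 := by
  simp only [DifferentiallyAlgebraic, ← jet_apply, ← MvPolynomial.aeval_eq_eval]
  constructor
  · rintro ⟨n, P, hP, hPf⟩
    refine ⟨MvPolynomial.rename Fin.val P, ?_, fun z hz ↦ ?_⟩
    · rwa [Ne, MvPolynomial.rename_eq_zero_iff_of_injective _ Fin.val_injective]
    · rw [MvPolynomial.aeval_rename]
      exact hPf z hz
  · rintro ⟨P, hP, hPf⟩
    obtain ⟨n, hn⟩ := P.vars.bddAbove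
    have hvars : (P.vars : Set ℕ) ⊆ Set.range (Fin.val : Fin (n + 2) → ℕ) := fun i hi ↦
      ⟨⟨i, by have := hn hi; lia⟩, rfl⟩
    obtain ⟨Q, rfl⟩ :=
      MvPolynomial.exists_rename_eq_of_vars_subset_range P _ Fin.val_injective hvars
    refine ⟨n, Q, fun hQ ↦ hP (by rw [hQ, map_zero]), fun z hz ↦ ?_⟩
    have hQf := hPf z hz
    rw [MvPolynomial.aeval_rename] at hQf
    exact hQf

theorem differentiallyAlgebraic_iff_not_algebraicIndependent (hf : Meromorphic f) {a : ℂ}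
    (ha : AnalyticAt ℂ f a) :
    DifferentiallyAlgebraic f ↔ ¬ AlgebraicIndependent ℂ fun i ↦ taylorSeries (jet f i) a := by
  rw [differentiallyAlgebraic_iff_exists_aeval_jet,
    not_algebraicIndependent_taylorSeries_iff (analyticAt_jet ha)]
  refine exists_congr fun P ↦ and_congr_right fun _ ↦
    ⟨fun hP ↦ ha.eventually_analyticAt.mono hP, fun hP z hz ↦ ?_⟩
  have hanalytic : AnalyticOnNhd ℂ (fun z ↦ MvPolynomial.aeval (fun i ↦ jet f i z) P)
      {z | AnalyticAt ℂ f z} := fun w hw ↦ .aeval_mvPolynomial (analyticAt_jet hw) P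
  exact hanalytic.eqOn_zero_of_preconnected_of_eventuallyEq_zero
    (isPreconnected_setOf_analyticAt hf) ha hP hz

end DifferentiallyAlgebraic

/-- If `e` is entire with `e'` not identically zero, `g` is meromorphic on `ℂ`, and both
`e` and `g` are differentially algebraic, then `g ∘ e` is meromorphic on `ℂ` and
differentially algebraic. -/
theorem comp_meromorphic_diffAlgebraic (e g : ℂ → ℂ)
    (he : Differentiable ℂ e) (he' : ∃ z : ℂ, deriv e z ≠ 0)
    (hg : MeromorphicOn g Set.univ)
    (hea : DifferentiallyAlgebraic e) (hga : DifferentiallyAlgebraic g) :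
    MeromorphicOn (g ∘ e) Set.univ ∧ DifferentiallyAlgebraic (g ∘ e) := by
  rw [meromorphicOn_univ] at hg ⊢
  have hgemer : Meromorphic (g ∘ e) := fun z ↦ (hg (e z)).comp_analyticAt (he.analyticAt z)
  refine ⟨hgemer, ?_⟩
  obtain ⟨z, hz⟩ := he'
  obtain ⟨a, hderiv, hag⟩ :=
    exists_deriv_ne_zero_and_analyticAt_comp (he.analyticAt z) hz (hg (e z))
  have hae : AnalyticAt ℂ e a := he.analyticAt a
  have hemer : Meromorphic e := fun w ↦ (he.analyticAt w).meromorphicAt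
  rw [differentiallyAlgebraic_iff_not_algebraicIndependent hemer hae] at hea
  rw [differentiallyAlgebraic_iff_not_algebraicIndependent hg hag] at hga
  rw [differentiallyAlgebraic_iff_not_algebraicIndependent hgemer (hag.comp hae)]
  exact not_algebraicIndependent_taylorSeries_jet_comp hae hag hderiv hea hga
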